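/- arXiv:2401.07952 — 3 statements merged into one kernel-verified Lean document; each statement's English description precedes it below -/
import Mathlib

section
/- Fix x ∈ H, q ∈ K, z, ζ ∈ Ξ, θ ∈ L²(ν₂) and u, u' ∈ L²(ν₁), and define γ₁ : H → ℝ by γ₁(w) := sup_{a∈U}(r(x,q,a,w)−1) if u(w) ≥ u'(w) and γ₁(w) := inf_{a∈U}(r(x,q,a,w)−1) if u(w) < u'(w); assume γ₁ is Borel measurable (this holds e.g. when U is countable). Then η−1 ≤ γ₁(w) ≤ C_r−1 for all w ∈ H, and ψ(x,q,z,ζ,u,θ) − ψ(x,q,z,ζ,u',θ) ≤ ∫_H (u(w)−u'(w)) γ₁(w) dν₁(w). -/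
open MeasureTheory RealInnerProductSpace

theorem kernel_bound_aux {E : Type*} [MeasurableSpace E] (μ : Measure E) [IsFiniteMeasure μ]
    (v : Lp ℝ 2 μ) (g : E → ℝ) (hg : Measurable g) (C : ℝ) (hC : ∀ w, |g w| ≤ C) :
    Integrable (fun w => v w * g w) μ ∧ -(∫ w, |v w| * C ∂μ) ≤ ∫ w, v w * g w ∂μ := by
  have hv : Integrable (fun w => v w) μ := (Lp.memLp v).integrable (by norm_num)
  have hi : Integrable (fun w => v w * g w) μ :=
    hv.mul_bdd (c := C) hg.aestronglyMeasurable (Filter.Eventually.of_forall hC)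
  refine ⟨hi, ?_⟩
  rw [← integral_neg]
  refine integral_mono (hv.abs.mul_const C).neg hi fun w => ?_
  have h1 : |v w * g w| ≤ |v w| * C := by
    rw [abs_mul]
    exact mul_le_mul_of_nonneg_left (hC w) (abs_nonneg _)
  exact (abs_le.1 h1).1

theorem hamiltonian_kernel_estimate_u
    {H K Ξ U : Type*}
    [NormedAddCommGroup H] [InnerProductSpace ℝ H] [CompleteSpace H] [SecondCountableTopology H]
    [MeasurableSpace H] [BorelSpace H]
    [NormedAddCommGroup K] [InnerProductSpace ℝ K] [CompleteSpace K] [SecondCountableTopology K]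
    [MeasurableSpace K] [BorelSpace K]
    [NormedAddCommGroup Ξ] [InnerProductSpace ℝ Ξ] [CompleteSpace Ξ] [SecondCountableTopology Ξ]
    [Nonempty U]
    (ν₁ : Measure H) (ν₂ : Measure K) [IsFiniteMeasure ν₁] [IsFiniteMeasure ν₂]
    (Rinv : H →L[ℝ] Ξ)
    (l : H → K → U → ℝ) (b : H → K → U → H) (ρ : U → Ξ)
    (r : H → K → U → H → ℝ) (γ : U → K → ℝ)
    (Ml Ll M' Lb Lr η Cr η' Cγ : ℝ)
    (hl_bound : ∀ x q a, |l x q a| ≤ Ml)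
    (hl_lip : ∀ x x' q q' a, |l x q a - l x' q' a| ≤ Ll * (‖x - x'‖ + ‖q - q'‖))
    (hb_bound : ∀ x q a, ‖b x q a‖ + ‖ρ a‖ ≤ M')
    (hb_lip : ∀ x x' q q' a, ‖b x q a - b x' q' a‖ ≤ Lb * (‖x - x'‖ + ‖q - q'‖))
    (hη : 0 < η) (hCr : 1 < Cr)
    (hr_lb : ∀ x q a w, η ≤ r x q a w) (hr_ub : ∀ x q a w, r x q a w ≤ Cr)
    (hr_lip : ∀ x x' q q' a w, |r x q a w - r x' q' a w| ≤ Lr * (‖x - x'‖ + ‖q - q'‖))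
    (hη' : 0 < η') (hCγ : 1 < Cγ)
    (hγ_lb : ∀ a w, η' ≤ γ a w) (hγ_ub : ∀ a w, γ a w ≤ Cγ)
    (hr_meas : ∀ x q a, Measurable (fun w => r x q a w))
    (hγ_meas : ∀ a, Measurable (fun w => γ a w))
    (ψ : H → K → Ξ → Ξ → Lp ℝ 2 ν₁ → Lp ℝ 2 ν₂ → ℝ)
    (hψ : ∀ x q z ζ u θ, ψ x q z ζ u θ =
      ⨅ a : U, (l x q a + ⟪z, Rinv (b x q a)⟫ + ⟪ζ, ρ a⟫
        + ∫ w, u w * (r x q a w - 1) ∂ν₁ + ∫ w, θ w * (γ a w - 1) ∂ν₂))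
    (x : H) (q : K) (z ζ : Ξ) (θ : Lp ℝ 2 ν₂) (u u' : Lp ℝ 2 ν₁)
    (γ₁ : H → ℝ) (hγ₁_meas : Measurable γ₁)
    (hγ₁_def : ∀ w, γ₁ w = if u' w ≤ u w then ⨆ a : U, (r x q a w - 1)
      else ⨅ a : U, (r x q a w - 1)) :
    (∀ w, η - 1 ≤ γ₁ w ∧ γ₁ w ≤ Cr - 1) ∧
      ψ x q z ζ u θ - ψ x q z ζ u' θ ≤ ∫ w, (u w - u' w) * γ₁ w ∂ν₁ := by
  have hrb : ∀ a w, |r x q a w - 1| ≤ Cr := fun a w => by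
    have h1 := hr_lb x q a w
    have h2 := hr_ub x q a w
    rw [abs_le]; constructor <;> linarith
  have hγb : ∀ a w, |γ a w - 1| ≤ Cγ := fun a w => by
    have h1 := hγ_lb a w
    have h2 := hγ_ub a w
    rw [abs_le]; constructor <;> linarith
  have hba : ∀ w, BddAbove (Set.range fun a : U => r x q a w - 1) := fun w =>
    ⟨Cr, by rintro _ ⟨a, rfl⟩; exact (abs_le.1 (hrb a w)).2⟩
  have hbb : ∀ w, BddBelow (Set.range fun a : U => r x q a w - 1) := fun w =>
    ⟨-Cr, by rintro _ ⟨a, rfl⟩; exact (abs_le.1 (hrb a w)).1⟩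
  have hbd : ∀ w, η - 1 ≤ γ₁ w ∧ γ₁ w ≤ Cr - 1 := by
    intro w
    obtain ⟨a₀⟩ := ‹Nonempty U›
    haveI : Nonempty U := ⟨a₀⟩
    have e1 := hr_lb x q a₀ w
    have e2 := hr_ub x q a₀ w
    rw [hγ₁_def w]
    split_ifs
    · refine ⟨le_trans ?_ (le_ciSup (hba w) a₀), ciSup_le fun a => ?_⟩
      · show η - 1 ≤ r x q a₀ w - 1
        linarith
      · have := hr_ub x q a w
        linarith
    · refine ⟨le_ciInf fun a => ?_, le_trans (ciInf_le (hbb w) a₀) ?_⟩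
      · have := hr_lb x q a w
        linarith
      · show r x q a₀ w - 1 ≤ Cr - 1
        linarith
  refine ⟨hbd, ?_⟩
  have hr1 : ∀ a, Measurable (fun w => r x q a w - 1) := fun a => (hr_meas x q a).sub_const 1
  have hγ1 : ∀ a, Measurable (fun w => γ a w - 1) := fun a => (hγ_meas a).sub_const 1
  have hγ₁b : ∀ w, |γ₁ w| ≤ Cr := fun w => by
    have := hbd w
    rw [abs_le]; constructor <;> linarith
  have hI : Integrable (fun w => (u w - u' w) * γ₁ w) ν₁ := by
    have h1 := (kernel_bound_aux ν₁ u γ₁ hγ₁_meas Cr hγ₁b).1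
    have h2 := (kernel_bound_aux ν₁ u' γ₁ hγ₁_meas Cr hγ₁b).1
    refine (h1.sub h2).congr (Filter.Eventually.of_forall fun w => ?_)
    simp only [Pi.sub_apply]
    ring
  have key : ∀ a, ∫ w, u w * (r x q a w - 1) ∂ν₁
      ≤ ∫ w, u' w * (r x q a w - 1) ∂ν₁ + ∫ w, (u w - u' w) * γ₁ w ∂ν₁ := by
    intro a
    have h1 := (kernel_bound_aux ν₁ u _ (hr1 a) Cr (hrb a)).1
    have h2 := (kernel_bound_aux ν₁ u' _ (hr1 a) Cr (hrb a)).1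
    rw [← integral_add h2 hI]
    refine integral_mono h1 (h2.add hI) fun w => ?_
    show u w * (r x q a w - 1) ≤ u' w * (r x q a w - 1) + (u w - u' w) * γ₁ w
    have h3 : (u w - u' w) * (r x q a w - 1) ≤ (u w - u' w) * γ₁ w := by
      rw [hγ₁_def w]
      split_ifs with h
      · exact mul_le_mul_of_nonneg_left (le_ciSup (hba w) a) (sub_nonneg.2 h)
      · exact mul_le_mul_of_nonpos_left (ciInf_le (hbb w) a) (by linarith)
    linarith
  have hbelow : BddBelow (Set.range fun a : U => (l x q a + ⟪z, Rinv (b x q a)⟫ + ⟪ζ, ρ a⟫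
        + ∫ w, u w * (r x q a w - 1) ∂ν₁ + ∫ w, θ w * (γ a w - 1) ∂ν₂)) := by
    refine ⟨-Ml + -(‖z‖ * (‖Rinv‖ * M')) + -(‖ζ‖ * M') + -(∫ w, |u w| * Cr ∂ν₁)
      + -(∫ w, |θ w| * Cγ ∂ν₂), ?_⟩
    rintro _ ⟨a, rfl⟩
    have h1 := (kernel_bound_aux ν₁ u _ (hr1 a) Cr (hrb a)).2
    have h2 := (kernel_bound_aux ν₂ θ _ (hγ1 a) Cγ (hγb a)).2
    have h3 := (abs_le.1 (hl_bound x q a)).1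
    have hb1 : ‖b x q a‖ ≤ M' := by linarith [hb_bound x q a, norm_nonneg (ρ a)]
    have hb2 : ‖ρ a‖ ≤ M' := by linarith [hb_bound x q a, norm_nonneg (b x q a)]
    have h4 : |⟪z, Rinv (b x q a)⟫| ≤ ‖z‖ * (‖Rinv‖ * M') :=
      (abs_real_inner_le_norm _ _).trans (mul_le_mul_of_nonneg_left
        ((Rinv.le_opNorm _).trans (mul_le_mul_of_nonneg_left hb1 (norm_nonneg _)))
        (norm_nonneg _))
    have h5 : |⟪ζ, ρ a⟫| ≤ ‖ζ‖ * M' :=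
      (abs_real_inner_le_norm _ _).trans (mul_le_mul_of_nonneg_left hb2 (norm_nonneg _))
    have h4' := (abs_le.1 h4).1
    have h5' := (abs_le.1 h5).1
    exact add_le_add (add_le_add (add_le_add (add_le_add h3 h4') h5') h1) h2
  rw [sub_le_iff_le_add, ← sub_le_iff_le_add', hψ x q z ζ u' θ]
  refine le_ciInf fun a => ?_
  have h6 := ciInf_le hbelow a
  rw [← hψ x q z ζ u θ] at h6
  have h7 := key a
  linarith
end

section
/- Fix x ∈ H, q ∈ K, z, ζ ∈ Ξ, u ∈ L²(ν₁) and θ, θ' ∈ L²(ν₂), and define γ₂ : K → ℝ by γ₂(w) := sup_{a∈U}(γ(a,w)−1) if θ(w) ≥ θ'(w) and γ₂(w) := inf_{a∈U}(γ(a,w)−1) if θ(w) < θ'(w); assume γ₂ is Borel measurable (this holds e.g. when U is countable). Then η'−1 ≤ γ₂(w) ≤ C_γ−1 for all w ∈ K, and ψ(x,q,z,ζ,u,θ) − ψ(x,q,z,ζ,u,θ') ≤ ∫_K (θ(w)−θ'(w)) γ₂(w) dν₂(w). -/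
open MeasureTheory RealInnerProductSpace

theorem aux_int {X : Type*} [MeasurableSpace X] (μ : Measure X) [IsFiniteMeasure μ]
    (f : Lp ℝ 2 μ) : Integrable (fun w => f w) μ :=
  (Lp.memLp f).integrable (by norm_num)

theorem aux_mul {X : Type*} [MeasurableSpace X] (μ : Measure X)
    (f g : X → ℝ) (C : ℝ) (hf : Integrable f μ) (hg : Measurable g) (hC : ∀ w, |g w| ≤ C) :
    Integrable (fun w => f w * g w) μ :=
  hf.mul_bdd (c := C) hg.aestronglyMeasurable (Filter.Eventually.of_forall hC)

theorem aux_bd {X : Type*} [MeasurableSpace X] (μ : Measure X)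
    (f g : X → ℝ) (C : ℝ) (hf : Integrable f μ) (hC : ∀ w, |g w| ≤ C) :
    -(∫ w, ‖f w‖ * C ∂μ) ≤ ∫ w, f w * g w ∂μ := by
  have h : ‖∫ w, f w * g w ∂μ‖ ≤ ∫ w, ‖f w‖ * C ∂μ := by
    apply norm_integral_le_of_norm_le (hf.norm.mul_const C)
    refine Filter.Eventually.of_forall fun w => ?_
    rw [norm_mul]
    exact mul_le_mul_of_nonneg_left (hC w) (norm_nonneg _)
  exact (abs_le.mp h).1

theorem hamiltonian_kernel_estimate_theta
    {H K Ξ U : Type*}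
    [NormedAddCommGroup H] [InnerProductSpace ℝ H] [CompleteSpace H] [SecondCountableTopology H]
    [MeasurableSpace H] [BorelSpace H]
    [NormedAddCommGroup K] [InnerProductSpace ℝ K] [CompleteSpace K] [SecondCountableTopology K]
    [MeasurableSpace K] [BorelSpace K]
    [NormedAddCommGroup Ξ] [InnerProductSpace ℝ Ξ] [CompleteSpace Ξ] [SecondCountableTopology Ξ]
    [Nonempty U]
    (ν₁ : Measure H) (ν₂ : Measure K) [IsFiniteMeasure ν₁] [IsFiniteMeasure ν₂]
    (Rinv : H →L[ℝ] Ξ)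
    (l : H → K → U → ℝ) (b : H → K → U → H) (ρ : U → Ξ)
    (r : H → K → U → H → ℝ) (γ : U → K → ℝ)
    (Ml Ll M' Lb Lr η Cr η' Cγ : ℝ)
    (hl_bound : ∀ x q a, |l x q a| ≤ Ml)
    (hl_lip : ∀ x x' q q' a, |l x q a - l x' q' a| ≤ Ll * (‖x - x'‖ + ‖q - q'‖))
    (hb_bound : ∀ x q a, ‖b x q a‖ + ‖ρ a‖ ≤ M')
    (hb_lip : ∀ x x' q q' a, ‖b x q a - b x' q' a‖ ≤ Lb * (‖x - x'‖ + ‖q - q'‖))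
    (hη : 0 < η) (hCr : 1 < Cr)
    (hr_lb : ∀ x q a w, η ≤ r x q a w) (hr_ub : ∀ x q a w, r x q a w ≤ Cr)
    (hr_lip : ∀ x x' q q' a w, |r x q a w - r x' q' a w| ≤ Lr * (‖x - x'‖ + ‖q - q'‖))
    (hη' : 0 < η') (hCγ : 1 < Cγ)
    (hγ_lb : ∀ a w, η' ≤ γ a w) (hγ_ub : ∀ a w, γ a w ≤ Cγ)
    (hr_meas : ∀ x q a, Measurable (fun w => r x q a w))
    (hγ_meas : ∀ a, Measurable (fun w => γ a w))
    (ψ : H → K → Ξ → Ξ → Lp ℝ 2 ν₁ → Lp ℝ 2 ν₂ → ℝ)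
    (hψ : ∀ x q z ζ u θ, ψ x q z ζ u θ =
      ⨅ a : U, (l x q a + ⟪z, Rinv (b x q a)⟫ + ⟪ζ, ρ a⟫
        + ∫ w, u w * (r x q a w - 1) ∂ν₁ + ∫ w, θ w * (γ a w - 1) ∂ν₂))
    (x : H) (q : K) (z ζ : Ξ) (u : Lp ℝ 2 ν₁) (θ θ' : Lp ℝ 2 ν₂)
    (γ₂ : K → ℝ) (hγ₂_meas : Measurable γ₂)
    (hγ₂_def : ∀ w, γ₂ w = if θ' w ≤ θ w then ⨆ a : U, (γ a w - 1)
      else ⨅ a : U, (γ a w - 1)) :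
    (∀ w, η' - 1 ≤ γ₂ w ∧ γ₂ w ≤ Cγ - 1) ∧
      ψ x q z ζ u θ - ψ x q z ζ u θ' ≤ ∫ w, (θ w - θ' w) * γ₂ w ∂ν₂ := by
  have hba : ∀ w, BddAbove (Set.range fun a : U => γ a w - 1) := fun w =>
    ⟨Cγ - 1, by rintro _ ⟨a, rfl⟩; linarith [hγ_ub a w]⟩
  have hbb : ∀ w, BddBelow (Set.range fun a : U => γ a w - 1) := fun w =>
    ⟨η' - 1, by rintro _ ⟨a, rfl⟩; linarith [hγ_lb a w]⟩
  have hbd : ∀ w, η' - 1 ≤ γ₂ w ∧ γ₂ w ≤ Cγ - 1 := by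
    intro w
    obtain ⟨a⟩ := ‹Nonempty U›
    haveI : Nonempty U := ⟨a⟩
    rw [hγ₂_def]
    split_ifs
    · exact ⟨le_trans (by linarith [hγ_lb a w]) (le_ciSup (hba w) a),
        ciSup_le fun a => by linarith [hγ_ub a w]⟩
    · exact ⟨le_ciInf fun a => by linarith [hγ_lb a w],
        le_trans (ciInf_le (hbb w) a) (by linarith [hγ_ub a w])⟩
  refine ⟨hbd, ?_⟩
  have hγ1 : ∀ a w, |γ a w - 1| ≤ Cγ := fun a w =>
    abs_le.mpr ⟨by linarith [hγ_lb a w], by linarith [hγ_ub a w]⟩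
  have hγ2 : ∀ w, |γ₂ w| ≤ Cγ := fun w =>
    abs_le.mpr ⟨by linarith [(hbd w).1], by linarith [(hbd w).2]⟩
  have hr1 : ∀ a w, |r x q a w - 1| ≤ Cr := fun a w =>
    abs_le.mpr ⟨by linarith [hr_lb x q a w], by linarith [hr_ub x q a w]⟩
  have hi : ∀ (f : Lp ℝ 2 ν₂) (a : U), Integrable (fun w => f w * (γ a w - 1)) ν₂ := fun f a =>
    aux_mul ν₂ _ _ Cγ (aux_int ν₂ f) ((hγ_meas a).sub_const 1) (hγ1 a)
  have hkey : ∀ a, ∫ w, θ w * (γ a w - 1) ∂ν₂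
      ≤ ∫ w, θ' w * (γ a w - 1) ∂ν₂ + ∫ w, (θ w - θ' w) * γ₂ w ∂ν₂ := by
    intro a
    have hi2 : Integrable (fun w => (θ w - θ' w) * γ₂ w) ν₂ :=
      aux_mul ν₂ (fun w => θ w - θ' w) _ Cγ ((aux_int ν₂ θ).sub (aux_int ν₂ θ')) hγ₂_meas hγ2
    rw [← integral_add (hi θ' a) hi2]
    refine integral_mono (hi θ a) ((hi θ' a).add hi2) fun w => ?_
    have : (θ w - θ' w) * (γ a w - 1) ≤ (θ w - θ' w) * γ₂ w := by
      rw [hγ₂_def]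
      split_ifs with h
      · exact mul_le_mul_of_nonneg_left (le_ciSup (hba w) a) (by linarith)
      · exact mul_le_mul_of_nonpos_left (ciInf_le (hbb w) a) (by linarith)
    simp only [Pi.add_apply]
    linarith
  have hbelow : BddBelow (Set.range fun a : U => (l x q a + ⟪z, Rinv (b x q a)⟫ + ⟪ζ, ρ a⟫
        + ∫ w, u w * (r x q a w - 1) ∂ν₁ + ∫ w, θ w * (γ a w - 1) ∂ν₂)) := by
    refine ⟨-Ml + -(‖z‖ * (‖Rinv‖ * M')) + -(‖ζ‖ * M') + -(∫ w, ‖u w‖ * Cr ∂ν₁)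
      + -(∫ w, ‖θ w‖ * Cγ ∂ν₂), ?_⟩
    rintro _ ⟨a, rfl⟩
    have hb1 : ‖b x q a‖ ≤ M' := by linarith [hb_bound x q a, norm_nonneg (ρ a)]
    have hρ1 : ‖ρ a‖ ≤ M' := by linarith [hb_bound x q a, norm_nonneg (b x q a)]
    have h1 := (abs_le.mp (hl_bound x q a)).1
    have h2 : -(‖z‖ * (‖Rinv‖ * M')) ≤ ⟪z, Rinv (b x q a)⟫ := by
      refine (abs_le.mp ((abs_real_inner_le_norm _ _).trans ?_)).1
      have := Rinv.le_opNorm (b x q a)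
      have h' := mul_le_mul_of_nonneg_left hb1 (norm_nonneg Rinv)
      exact mul_le_mul_of_nonneg_left (this.trans h') (norm_nonneg z)
    have h3 : -(‖ζ‖ * M') ≤ ⟪ζ, ρ a⟫ :=
      (abs_le.mp ((abs_real_inner_le_norm _ _).trans
        (mul_le_mul_of_nonneg_left hρ1 (norm_nonneg ζ)))).1
    have h4 := aux_bd ν₁ (fun w => u w) _ Cr (aux_int ν₁ u) (hr1 a)
    have h5 := aux_bd ν₂ (fun w => θ w) _ Cγ (aux_int ν₂ θ) (hγ1 a)
    exact add_le_add (add_le_add (add_le_add (add_le_add h1 h2) h3) h4) h5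
  rw [sub_le_comm, hψ x q z ζ u θ']
  refine le_ciInf fun a => ?_
  have h := ciInf_le hbelow a
  rw [← hψ x q z ζ u θ] at h
  have hk := hkey a
  linarith
end

section
/- Let H and K be real inner product spaces, μ > 0, L_F > 0, T > 0, and let F : H × K → K satisfy ⟨F(x,q) − F(x,q'), q − q'⟩ ≤ −μ‖q−q'‖² for all x ∈ H, q, q' ∈ K, and ‖F(x,q) − F(x',q)‖ ≤ L_F‖x−x'‖ for all x, x' ∈ H, q ∈ K. Let Γ, Γ' : [0,T] → H be continuous, let g : [0,T] → K be continuous, and let q, q̃ : [0,T] → K be differentiable with q'(t) = F(Γ(t), q(t)) + g(t), q̃'(t) = F(Γ'(t), q̃(t)) + g(t) for all t ∈ [0,T] and q(0) = q̃(0). Then ‖q(T) − q̃(T)‖ ≤ L_F ∫₀^T e^{−μ(T−s)} ‖Γ(s) − Γ'(s)‖ ds. -/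
open RealInnerProductSpace

/-- two solutions of the fast equation with the same initial datum and
forcing but different slow inputs Γ, Γ' satisfy
‖q(T) − q̃(T)‖ ≤ L_F ∫₀^T e^{−μ(T−s)} ‖Γ(s) − Γ'(s)‖ ds. -/
theorem dissipative_difference_estimate
    {H K : Type*} [NormedAddCommGroup H] [InnerProductSpace ℝ H]
    [NormedAddCommGroup K] [InnerProductSpace ℝ K]
    (μ LF T : ℝ) (hμ : 0 < μ) (hLF : 0 < LF) (hT : 0 < T)
    (F : H → K → K)
    (hFdiss : ∀ (x : H) (p p' : K), ⟪F x p - F x p', p - p'⟫ ≤ -μ * ‖p - p'‖ ^ 2)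
    (hFlip : ∀ (x x' : H) (p : K), ‖F x p - F x' p‖ ≤ LF * ‖x - x'‖)
    (Γ Γ' : ℝ → H)
    (hΓ : ContinuousOn Γ (Set.Icc 0 T)) (hΓ' : ContinuousOn Γ' (Set.Icc 0 T))
    (g : ℝ → K) (hg : ContinuousOn g (Set.Icc 0 T))
    (q qt : ℝ → K)
    (hq : ∀ t ∈ Set.Icc (0 : ℝ) T, HasDerivAt q (F (Γ t) (q t) + g t) t)
    (hqt : ∀ t ∈ Set.Icc (0 : ℝ) T, HasDerivAt qt (F (Γ' t) (qt t) + g t) t)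
    (h0 : q 0 = qt 0) :
    ‖q T - qt T‖ ≤ LF * ∫ s in (0 : ℝ)..T, Real.exp (-μ * (T - s)) * ‖Γ s - Γ' s‖ := by
  have hcont : ContinuousOn (fun s => LF * (Real.exp (-μ * (T - s)) * ‖Γ s - Γ' s‖))
      (Set.Icc 0 T) := by
    have h1 : Continuous (fun s : ℝ => Real.exp (-μ * (T - s))) := by fun_prop
    exact continuousOn_const.mul (h1.continuousOn.mul (hΓ.sub hΓ').norm)
  rw [← intervalIntegral.integral_const_mul]
  refine le_of_forall_pos_le_add fun ε hε => ?_
  have hderiv : ∀ t ∈ Set.Icc (0 : ℝ) T, HasDerivAt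
      (fun t => √(Real.exp (-μ * (T - t)) ^ 2 * ‖q t - qt t‖ ^ 2 + ε ^ 2))
      ((2 * μ * Real.exp (-μ * (T - t)) ^ 2 * ‖q t - qt t‖ ^ 2 +
        Real.exp (-μ * (T - t)) ^ 2 *
          (2 * ⟪q t - qt t, (F (Γ t) (q t) + g t) - (F (Γ' t) (qt t) + g t)⟫)) /
        (2 * √(Real.exp (-μ * (T - t)) ^ 2 * ‖q t - qt t‖ ^ 2 + ε ^ 2))) t := by
    intro t ht
    have hp := ((hq t ht).sub (hqt t ht)).norm_sq
    have he : HasDerivAt (fun t : ℝ => Real.exp (-μ * (T - t)))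
        (Real.exp (-μ * (T - t)) * (-μ * (-1))) t :=
      (((hasDerivAt_id t).const_sub T).const_mul (-μ)).exp
    have hu := ((he.pow 2).mul hp).add_const (ε ^ 2)
    refine (HasDerivAt.sqrt hu ?_).congr_deriv ?_
    · simp only [Pi.mul_apply, Pi.pow_apply, Pi.sub_apply]
      positivity
    · simp only [Pi.mul_apply, Pi.pow_apply, Pi.sub_apply]
      congr 1
      push_cast
      ring
  have key := intervalIntegral.sub_le_integral_of_hasDeriv_right_of_le hT.le
    (fun t ht => (hderiv t ht).continuousAt.continuousWithinAt)
    (fun t ht => (hderiv t (Set.Ioo_subset_Icc_self ht)).hasDerivWithinAt)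
    hcont.integrableOn_Icc ?_
  · simp only [h0, sub_self, norm_zero, mul_zero, Real.exp_zero] at key
    have e1 : √(Real.exp (-μ * (T - 0)) ^ 2 * 0 ^ 2 + ε ^ 2) = ε := by
      rw [zero_pow two_ne_zero, mul_zero, zero_add, Real.sqrt_sq hε.le]
    have e2 : ‖q T - qt T‖ ≤ √(1 ^ 2 * ‖q T - qt T‖ ^ 2 + ε ^ 2) := by
      apply Real.le_sqrt_of_sq_le
      nlinarith [sq_nonneg ε]
    simp only [sub_zero] at key e1
    rw [e1] at key
    linarith
  · intro t ht
    set E := Real.exp (-μ * (T - t)) with hE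
    have hE0 : 0 < E := Real.exp_pos _
    set n := ‖q t - qt t‖ with hn
    have hn0 : 0 ≤ n := norm_nonneg _
    set S := √(E ^ 2 * n ^ 2 + ε ^ 2) with hS
    have hS0 : 0 < S := Real.sqrt_pos.2 (by positivity)
    have hSn : E * n ≤ S := by
      apply Real.le_sqrt_of_sq_le
      nlinarith [sq_nonneg ε]
    have hin : ⟪q t - qt t, (F (Γ t) (q t) + g t) - (F (Γ' t) (qt t) + g t)⟫
        ≤ -μ * n ^ 2 + n * (LF * ‖Γ t - Γ' t‖) := by
      have : (F (Γ t) (q t) + g t) - (F (Γ' t) (qt t) + g t)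
          = (F (Γ t) (q t) - F (Γ t) (qt t)) + (F (Γ t) (qt t) - F (Γ' t) (qt t)) := by abel
      rw [this, inner_add_right]
      have a := hFdiss (Γ t) (q t) (qt t)
      rw [real_inner_comm] at a
      have b := real_inner_le_norm (q t - qt t) (F (Γ t) (qt t) - F (Γ' t) (qt t))
      have c := mul_le_mul_of_nonneg_left (hFlip (Γ t) (Γ' t) (qt t)) hn0
      linarith
    rw [div_le_iff₀ (by positivity)]
    have h1 := mul_le_mul_of_nonneg_left hin (sq_nonneg E)
    have h2 := mul_le_mul_of_nonneg_left hSn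
      (show 0 ≤ LF * (E * ‖Γ t - Γ' t‖) by positivity)
    linarith
end
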